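/- arXiv:2507.09433 — 3 statements merged into one kernel-verified Lean document; each statement's English description precedes it below -/
import Mathlib

section
/- There exists a constant c > 0 such that for all sufficiently large n, the number of distinct values attained by the permanent on the set of n×n matrices with entries ±1 satisfies r_n ≥ n^(c·log n / log log n). -/
/-- The permanent of a square `n × n` real matrix:
`per(M) = Σ_{σ ∈ S_n} Π_i M_{i, σ(i)}`. -/
noncomputable def sqPerm {n : ℕ} (M : Matrix (Fin n) (Fin n) ℝ) : ℝ :=
  ∑ σ : Equiv.Perm (Fin n), ∏ i, M i (σ i)

/-- `permCountSq n = r_n`: the number of distinct values attained by the permanent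
on the set `Ω_n` of `n × n` matrices with `±1` entries. -/
noncomputable def permCountSq (n : ℕ) : ℕ :=
  {x : ℝ | ∃ M : Matrix (Fin n) (Fin n) ℝ,
      (∀ i j, M i j = 1 ∨ M i j = -1) ∧ sqPerm M = x}.ncard

/-! Adding a row `a` to a rectangular matrix, place it in any column and subtract the collisions, in
which row `a` merges with another row `i` into their product. Iterating, the permanent becomes a
polynomial in the joint moments of the rows (sums over the columns of products of rows), and it is
linear in the moments involving `a` once all other moments are fixed.

Columns running over a full cube of signs let these moments vary independently. The rows `v i` have
vanishing moments there, and if row `a` is the character `∏ j ∈ K, v j`, orthogonality leaves only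
its moment with the rows in `K`. With `T` signed cubes for each of `m + 1` sets `K` of sizes
`0, …, m`, and `e` columns of ones, the permanent is an affine function of `m + 1` digits in
`{0, …, T}` whose coefficients `± k! e (e - 1) ⋯ (e - m + k + 1)` (up to a common factor) decrease
fast enough to make all `(T + 1) ^ (m + 1)` values distinct. Padding with rows of ones multiplies
every value by the same factorial. The choice `T = 2 ^ (m + 1)` with `m` of order `log n` gives
at least `2 ^ (m + 1) ^ 2 = n ^ Θ(log n)` values. -/

open Finset Filter

section RectangularPermanent

variable {ι κ α β R : Type*} [Fintype α] [Fintype β]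

section CommSemiring

variable [CommSemiring R]

/-- The permanent of a rectangular matrix, given as a family of rows: the sum over all placements of
the rows in distinct columns. It vanishes when there are more rows than columns. -/
noncomputable def rectPerm [Fintype ι] (M : ι → α → R) : R := ∑ f : ι ↪ α, ∏ i, M i (f i)

lemma rectPerm_comp_equiv [Fintype ι] [Fintype κ] (M : ι → α → R) (e : κ ≃ ι) (e' : β ≃ α) :
    rectPerm (fun k b ↦ M (e k) (e' b)) = rectPerm M :=
  Fintype.sum_equiv (e.embeddingCongr e') _ _ fun f ↦
    Fintype.prod_equiv e _ _ fun i ↦ by simp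

lemma permanent_eq_rectPerm [Fintype ι] [DecidableEq ι] (M : Matrix ι ι R) :
    M.permanent = rectPerm M := by
  rw [← Matrix.permanent_transpose]
  exact (Fintype.sum_equiv (Equiv.embeddingEquivOfFinite ι) _ _ fun f ↦ rfl).symm

lemma rectPerm_one [Fintype ι] : rectPerm (1 : ι → α → R) =
    (Fintype.card α).descFactorial (Fintype.card ι) := by
  simp [rectPerm, Fintype.card_embedding_eq]

lemma rectPerm_sumElim_one [Fintype ι] [Fintype κ] (M : ι → α → R) :
    rectPerm (Sum.elim M (1 : κ → α → R)) = rectPerm M *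
      (Fintype.card α - Fintype.card ι).descFactorial (Fintype.card κ) := by
  classical
  have card_extensions (f : ι ↪ α) : Fintype.card (κ ↪ ↥(Set.range f)ᶜ) =
      (Fintype.card α - Fintype.card ι).descFactorial (Fintype.card κ) := by
    rw [Fintype.card_embedding_eq, Fintype.card_compl_set, Set.card_range_of_injective f.injective]
  rw [rectPerm, Fintype.sum_equiv Equiv.sumEmbeddingEquivSigmaEmbeddingRestricted _
    (fun p : Σ f : ι ↪ α, κ ↪ ↥(Set.range f)ᶜ ↦ ∏ i, M i (p.1 i)) fun f ↦ ?extend,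
    Fintype.sum_sigma, rectPerm, sum_mul]
  case extend =>
    simp only [Fintype.prod_sum_type, Sum.elim_inl, Sum.elim_inr, Pi.one_apply, prod_const_one,
      mul_one]
    rfl
  refine sum_congr rfl fun f _ ↦ ?_
  dsimp only
  rw [sum_const, card_univ, card_extensions, nsmul_eq_mul, mul_comm]

/-- The rectangular permanent of the rows indexed by `I`. -/
noncomputable def rectPermOn (M : ι → α → R) (I : Finset ι) : R := rectPerm fun i : I ↦ M i

lemma rectPermOn_univ [Fintype ι] (M : ι → α → R) : rectPermOn M univ = rectPerm M :=
  rectPerm_comp_equiv M (Equiv.subtypeUnivEquiv mem_univ) (Equiv.refl α)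

lemma rectPermOn_congr {M N : ι → α → R} {I : Finset ι} (h : ∀ i ∈ I, M i = N i) :
    rectPermOn M I = rectPermOn N I :=
  congrArg rectPerm (funext fun i ↦ h i i.2)

/-- The joint moment of the rows indexed by `I`: the sum over the columns of the product of their
entries. -/
def rowMoment (M : ι → α → R) (I : Finset ι) : R := ∑ d, ∏ i ∈ I, M i d

lemma rowMoment_update_mul [DecidableEq ι] (M : ι → α → R) {a i : ι} {K : Finset ι}
    (ha : a ∉ insert i K) (hi : i ∉ K) :
    rowMoment (Function.update M i (M a * M i)) (insert i K) =
      rowMoment M (insert a (insert i K)) := by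
  refine sum_congr rfl fun d _ ↦ ?_
  rw [prod_insert ha, prod_insert hi, prod_insert hi, Function.update_self, Pi.mul_apply, mul_assoc]
  congr 2
  refine prod_congr rfl fun j hj ↦ ?_
  rw [Function.update_of_ne (ne_of_mem_of_not_mem hj hi)]

end CommSemiring

section CommRing

variable [CommRing R]

lemma rectPerm_option [Fintype ι] [DecidableEq ι] (M : Option ι → α → R) :
    rectPerm M = (∑ d, M none d) * rectPerm (fun i ↦ M (some i)) -
      ∑ i, rectPerm (Function.update (fun i ↦ M (some i)) i (M none * M (some i))) := by
  classical
  have sum_avoiding (f : ι ↪ α) : ∑ d : ↥(Set.range f)ᶜ, M none d =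
      ∑ d, M none d - ∑ i, M none (f i) := by
    rw [eq_sub_iff_add_eq, ← univ.sum_map f, ← sum_compl_add_sum (univ.map f)]
    congr 1
    exact sum_subtype _ (by simp) _ |>.symm
  have merge (f : ι ↪ α) (i : ι) : M none (f i) * ∏ j, M (some j) (f j) =
      ∏ j, Function.update (fun i ↦ M (some i)) i (M none * M (some i)) j (f j) := by
    rw [← mul_prod_erase univ _ (mem_univ i), ← mul_prod_erase univ _ (mem_univ i),
      Function.update_self, Pi.mul_apply, mul_assoc]
    congr 2
    refine prod_congr rfl fun j hj ↦ ?_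
    rw [Function.update_of_ne (ne_of_mem_erase hj)]
  calc rectPerm M
      = ∑ f : ι ↪ α, (∑ d : ↥(Set.range f)ᶜ, M none d) * ∏ i, M (some i) (f i) := by
        rw [rectPerm, Fintype.sum_equiv (Function.Embedding.optionEmbeddingEquiv ι α) _
          (fun p ↦ M none p.2 * ∏ i, M (some i) (p.1 i)) fun f ↦ Fintype.prod_option _,
          Fintype.sum_sigma]
        simp only [sum_mul]
    _ = _ := by
        simp only [sum_avoiding, sub_mul, sum_sub_distrib, rectPerm, mul_sum]
        simp only [sum_mul _ _ (∏ _, _), merge]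
        rw [sum_comm]
        congr 1
        rw [sum_comm]

lemma rectPermOn_insert [DecidableEq ι] (M : ι → α → R) {a : ι} {I : Finset ι} (ha : a ∉ I) :
    rectPermOn M (insert a I) = (∑ d, M a d) * rectPermOn M I -
      ∑ i ∈ I, rectPermOn (Function.update M i (M a * M i)) I := by
  rw [rectPermOn, ← rectPerm_comp_equiv _ (subtypeInsertEquivOption ha).symm (Equiv.refl α),
    rectPerm_option, ← sum_coe_sort I]
  congr 1
  refine sum_congr rfl fun i _ ↦ congrArg rectPerm ?_
  exact (Function.update_comp_eq_of_injective M Subtype.val_injective i _).symm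

lemma sum_sum_powerset_erase {A : Type*} [AddCommMonoid A] [DecidableEq ι] (I : Finset ι)
    (F : Finset ι → A) :
    ∑ i ∈ I, ∑ K ∈ (I.erase i).powerset, F (insert i K) = ∑ L ∈ I.powerset, #L • F L := by
  have containing (i : ι) (hi : i ∈ I) : ∑ K ∈ (I.erase i).powerset, F (insert i K) =
      ∑ L ∈ I.powerset with i ∈ L, F L := by
    refine sum_nbij' (insert i) (·.erase i) ?_ ?_ ?_ ?_ ?_ <;> grind
  rw [sum_congr rfl containing]
  simp only [sum_filter]
  rw [sum_comm]
  refine sum_congr rfl fun L hL ↦ ?_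
  rw [← sum_filter, sum_const, filter_mem_eq_inter, inter_eq_right.2 (mem_powerset.1 hL)]

theorem rectPermOn_insert_eq_sum_powerset [DecidableEq ι] (M : ι → α → R) {a : ι} {I : Finset ι}
    (ha : a ∉ I) :
    rectPermOn M (insert a I) = ∑ K ∈ I.powerset,
      (-1) ^ #K * (#K).factorial * (rowMoment M (insert a K) * rectPermOn M (I \ K)) := by
  induction I using Finset.strongInduction generalizing M a with
  | H I ih =>
  let G (K : Finset ι) : R := rowMoment M (insert a K) * rectPermOn M (I \ K)
  have merged (i : ι) (hi : i ∈ I) : rectPermOn (Function.update M i (M a * M i)) I =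
      ∑ K ∈ (I.erase i).powerset,
        (-1) ^ (#(insert i K) - 1) * (#(insert i K) - 1).factorial * G (insert i K) := by
    nth_rw 1 [← insert_erase hi]
    rw [ih _ (erase_ssubset hi) _ (notMem_erase i I)]
    refine sum_congr rfl fun K hK ↦ ?_
    obtain ⟨hKI, hiK⟩ := subset_erase.1 (mem_powerset.1 hK)
    rw [card_insert_of_notMem hiK, Nat.add_sub_cancel, rowMoment_update_mul M (by grind) hiK,
      erase_sdiff_comm, ← sdiff_insert, rectPermOn_congr fun j hj ↦
        Function.update_of_ne (by grind) _ _]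
  have coefficient (L : Finset ι) : (-1) ^ #L * ((#L).factorial : R) * G L =
      (if L = ∅ then G ∅ else 0) -
        #L • ((-1) ^ (#L - 1) * ((#L - 1).factorial : R) * G L) := by
    rcases L.eq_empty_or_nonempty with rfl | hL
    · simp
    · obtain ⟨m, hm⟩ := Nat.exists_eq_succ_of_ne_zero hL.card_ne_zero
      rw [if_neg hL.ne_empty, hm, Nat.succ_eq_add_one, Nat.factorial_succ, Nat.add_sub_cancel]
      push_cast [nsmul_eq_mul]
      ring
  calc rectPermOn M (insert a I)
      = G ∅ - ∑ L ∈ I.powerset, #L • ((-1) ^ (#L - 1) * ((#L - 1).factorial : R) * G L) := by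
        rw [rectPermOn_insert M ha, sum_congr rfl merged, sum_sum_powerset_erase I fun L ↦
          (-1) ^ (#L - 1) * ((#L - 1).factorial : R) * G L]
        simp [G, rowMoment]
    _ = ∑ K ∈ I.powerset, (-1) ^ #K * (#K).factorial * G K := by
        rw [sum_congr rfl fun L _ ↦ coefficient L, sum_sub_distrib, sum_ite_eq' _ ∅,
          if_pos (empty_mem_powerset I)]

lemma rectPermOn_congr_rowMoment {M : ι → α → R} {N : ι → β → R} {I : Finset ι}
    (h : ∀ K ⊆ I, K.Nonempty → rowMoment M K = rowMoment N K) :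
    rectPermOn M I = rectPermOn N I := by
  classical
  induction I using Finset.strongInduction with
  | H I ih =>
  obtain rfl | ⟨a, ha⟩ := I.eq_empty_or_nonempty
  · simp [rectPermOn, rectPerm]
  · rw [← insert_erase ha, rectPermOn_insert_eq_sum_powerset M (notMem_erase a I),
      rectPermOn_insert_eq_sum_powerset N (notMem_erase a I)]
    refine sum_congr rfl fun K hK ↦ ?_
    have hKI := mem_powerset.1 hK
    rw [h (insert a K) (by grind) (insert_nonempty a K), ih _ (by grind) fun L hL ↦ h L (by grind)]

lemma rectPermOn_of_rowMoment_eq {M : ι → α → R} {I : Finset ι} {e : ℕ}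
    (h : ∀ K ⊆ I, K.Nonempty → rowMoment M K = e) :
    rectPermOn M I = e.descFactorial #I := by
  rw [rectPermOn_congr_rowMoment (N := (1 : ι → Fin e → R)) fun K hK hne ↦ by
    rw [h K hK hne]; simp [rowMoment]]
  exact rectPerm_one.trans (by simp)

theorem rectPermOn_insert_of_rowMoment_eq [DecidableEq ι] {M : ι → α → R} {a : ι} {I : Finset ι}
    {e : ℕ} (ha : a ∉ I) (h : ∀ K ⊆ I, K.Nonempty → rowMoment M K = e) :
    rectPermOn M (insert a I) = e.descFactorial (#I + 1) + ∑ K ∈ I.powerset,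
      (-1) ^ #K * (#K).factorial * e.descFactorial (#I - #K) * (rowMoment M (insert a K) - e) := by
  let ones : ι → Fin e → R := 1
  have rowMoment_ones (K : Finset ι) : rowMoment ones K = e := by simp [ones, rowMoment]
  have rectPermOn_sdiff {K} (hK : K ∈ I.powerset) :
      rectPermOn M (I \ K) = e.descFactorial (#I - #K) := by
    rw [rectPermOn_of_rowMoment_eq fun J hJ ↦ h J (hJ.trans sdiff_subset),
      card_sdiff_of_subset (mem_powerset.1 hK)]
  rw [← sub_eq_iff_eq_add', ← card_insert_of_notMem ha,
    ← rectPermOn_of_rowMoment_eq fun K _ _ ↦ rowMoment_ones K,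
    rectPermOn_insert_eq_sum_powerset M ha, rectPermOn_insert_eq_sum_powerset ones ha,
    ← sum_sub_distrib]
  refine sum_congr rfl fun K hK ↦ ?_
  rw [rectPermOn_congr_rowMoment (N := M) fun J hJ hne ↦
      (rowMoment_ones J).trans (h J (hJ.trans sdiff_subset) hne).symm,
    rectPermOn_sdiff hK, rowMoment_ones]
  ring

end CommRing

end RectangularPermanent

section Signs

variable {ι β : Type*} [DecidableEq ι]

lemma sum_prod_units_mul_prod_units [Fintype ι] (K L : Finset ι) :
    ∑ v : ι → ℤˣ, (∏ i ∈ K, (v i : ℤ)) * ∏ i ∈ L, (v i : ℤ) =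
      if K = L then 2 ^ Fintype.card ι else 0 := by
  let factor (i : ι) (u : ℤˣ) : ℤ := (if i ∈ K then (u : ℤ) else 1) * if i ∈ L then (u : ℤ) else 1
  have sum_factor (i : ι) : ∑ u, factor i u = if i ∈ K ↔ i ∈ L then 2 else 0 := by
    by_cases hK : i ∈ K <;> by_cases hL : i ∈ L <;> simp [factor, hK, hL, UnitsInt.univ]
  calc ∑ v : ι → ℤˣ, (∏ i ∈ K, (v i : ℤ)) * ∏ i ∈ L, (v i : ℤ)
      = ∑ v : ι → ℤˣ, ∏ i, factor i (v i) := by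
        simp only [factor, prod_mul_distrib, prod_ite_mem, univ_inter]
    _ = ∏ i, ∑ u, factor i u := by
        rw [prod_univ_sum, Fintype.piFinset_univ]
    _ = _ := by
        simp only [sum_factor, Fintype.prod_ite_zero, prod_const, card_univ, Finset.ext_iff]

/-- The `±1` matrix with, for each `b : β`, one block whose columns `v` run over the cube of all
sign vectors, followed by `e` columns of ones. In block `b` the row `i ≠ a` has entries `v i`, and
the row `a` is the signed character `ε b * ∏ j ∈ K b, v j`. -/
def cubeRows (e : ℕ) (a : ι) (K : β → Finset ι) (ε : β → ℤˣ) (i : ι) :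
    β × (ι → ℤˣ) ⊕ Fin e → ℤˣ
  | .inl (b, v) => if i = a then ε b * ∏ j ∈ K b, v j else v i
  | .inr _ => 1

variable {e : ℕ} {a : ι} {K : β → Finset ι} {ε : β → ℤˣ}

lemma prod_cubeRows_inl {I : Finset ι} (ha : a ∉ I) (b : β) (v : ι → ℤˣ) :
    ∏ i ∈ I, (cubeRows e a K ε i (.inl (b, v)) : ℤ) = ∏ i ∈ I, (v i : ℤ) :=
  prod_congr rfl fun i hi ↦ by rw [cubeRows, if_neg (ne_of_mem_of_not_mem hi ha)]

variable [Fintype ι] [Fintype β]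

lemma rowMoment_cubeRows {I : Finset ι} (ha : a ∉ I) (hI : I.Nonempty) :
    rowMoment (fun i d ↦ (cubeRows e a K ε i d : ℤ)) I = e := by
  have sum_cube : ∑ v : ι → ℤˣ, ∏ i ∈ I, (v i : ℤ) = 0 := by
    simpa [hI.ne_empty.symm] using sum_prod_units_mul_prod_units ∅ I
  simp only [rowMoment, Fintype.sum_sum_type, Fintype.sum_prod_type, prod_cubeRows_inl ha, sum_cube]
  simp [cubeRows]

lemma rowMoment_cubeRows_insert {I : Finset ι} (ha : a ∉ I) :
    rowMoment (fun i d ↦ (cubeRows e a K ε i d : ℤ)) (insert a I) =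
      e + 2 ^ Fintype.card ι * ∑ b with K b = I, (ε b : ℤ) := by
  have sum_cube (b : β) :
      ∑ v, ∏ i ∈ insert a I, (cubeRows e a K ε i (.inl (b, v)) : ℤ) =
        if K b = I then (ε b : ℤ) * 2 ^ Fintype.card ι else 0 := by
    have row_a (v) : (cubeRows e a K ε a (.inl (b, v)) : ℤ) = ε b * ∏ j ∈ K b, (v j : ℤ) := by
      simp [cubeRows]
    simp only [prod_insert ha, prod_cubeRows_inl ha, row_a, mul_assoc, ← mul_sum,
      sum_prod_units_mul_prod_units, mul_ite, mul_zero]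
  simp only [rowMoment, Fintype.sum_sum_type, Fintype.sum_prod_type, sum_cube, ← sum_filter,
    ← sum_mul]
  simp [cubeRows, add_comm, mul_comm]

theorem rectPerm_cubeRows (hK : ∀ b, a ∉ K b) :
    rectPerm (fun i d ↦ (cubeRows e a K ε i d : ℤ)) = e.descFactorial (Fintype.card ι) +
      2 ^ Fintype.card ι * ∑ b, (-1) ^ #(K b) * (#(K b)).factorial *
        (e.descFactorial (Fintype.card ι - 1 - #(K b)) : ℤ) * ε b := by
  have ha : a ∉ univ.erase a := notMem_erase a univ
  have card_rows : #(univ.erase a) = Fintype.card ι - 1 := card_erase_of_mem (mem_univ a)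
  have card_pos : 0 < Fintype.card ι := Fintype.card_pos_iff.2 ⟨a⟩
  rw [← rectPermOn_univ, ← insert_erase (mem_univ a), rectPermOn_insert_of_rowMoment_eq ha
    fun I hI ↦ rowMoment_cubeRows fun h ↦ ha (hI h), card_rows, Nat.sub_add_cancel card_pos,
    mul_sum, ← sum_fiberwise_of_maps_to (g := K) (t := (univ.erase a).powerset) (by grind)]
  congr 1
  refine sum_congr rfl fun L hL ↦ ?_
  rw [rowMoment_cubeRows_insert (by grind), add_sub_cancel_left, mul_sum, mul_sum]
  refine sum_congr rfl fun b hb ↦ ?_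
  rw [(mem_filter.1 hb).2]
  ring

end Signs

section Digits

variable {m : ℕ} {T : ℤ} {w : Fin (m + 1) → ℤ}

lemma mul_sum_lt_of_superdecreasing (hw : ∀ k, 0 < w k)
    (hstep : ∀ k : Fin m, (T + 1) * w k.succ ≤ w k.castSucc) :
    T * ∑ k, w k < (T + 1) * w 0 := by
  induction m with
  | zero =>
    rw [Fin.sum_univ_one]
    linarith [hw 0]
  | succ m ih =>
    rw [Fin.sum_univ_succ]
    linarith [ih (fun k ↦ hw k.succ) (fun k ↦ hstep k.succ), show _ ≤ w 0 from hstep 0]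

lemma eq_zero_of_sum_mul_eq_zero (hw : ∀ k, 0 < w k)
    (hstep : ∀ k : Fin m, (T + 1) * w k.succ ≤ w k.castSucc) {δ : Fin (m + 1) → ℤ}
    (hδ : ∀ k, |δ k| ≤ T) (hsum : ∑ k, δ k * w k = 0) : δ = 0 := by
  induction m with
  | zero =>
    rw [Fin.sum_univ_one] at hsum
    exact funext (Fin.forall_fin_one.2 ((mul_eq_zero_iff_right (hw 0).ne').1 hsum))
  | succ m ih =>
    have hw' (k : Fin (m + 1)) := hw k.succ
    have hstep' (k : Fin m) := hstep k.succ
    have tail_lt : |∑ k : Fin (m + 1), δ k.succ * w k.succ| < w 0 :=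
      calc |∑ k : Fin (m + 1), δ k.succ * w k.succ|
          ≤ ∑ k : Fin (m + 1), T * w k.succ := (abs_sum_le_sum_abs _ _).trans <|
            sum_le_sum fun k _ ↦ by
              rw [abs_mul, abs_of_pos (hw' k)]
              exact mul_le_mul_of_nonneg_right (hδ k.succ) (hw' k).le
        _ < (T + 1) * w (Fin.succ 0) := by
            rw [← mul_sum]
            exact mul_sum_lt_of_superdecreasing hw' hstep'
        _ ≤ w 0 := hstep 0
    rw [Fin.sum_univ_succ] at hsum
    have head_lt : |δ 0| * w 0 < 1 * w 0 := by
      rwa [one_mul, ← abs_of_pos (hw 0), ← abs_mul, eq_neg_of_add_eq_zero_left hsum, abs_neg,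
        abs_of_pos (hw 0)]
    have head_eq : δ 0 = 0 := Int.abs_lt_one_iff.1 (lt_of_mul_lt_mul_right head_lt (hw 0).le)
    have tail_eq := ih hw' hstep' (fun k ↦ hδ k.succ) (by simpa [head_eq] using hsum)
    exact funext (Fin.cases head_eq (congrFun tail_eq))

end Digits

section Construction

/-- The signs of `T` copies of each block `k : κ`, in which exactly the first `τ k` copies of block
`k` are positive. -/
def thresholdSign {κ : Type*} {T : ℕ} (τ : κ → Fin (T + 1)) (b : κ × Fin T) : ℤˣ :=
  if b.2.castSucc < τ b.1 then 1 else -1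

variable {m T e : ℕ}

lemma sum_thresholdSign {κ : Type*} (τ : κ → Fin (T + 1)) (k : κ) :
    ∑ t, (thresholdSign τ (k, t) : ℤ) = 2 * (τ k : ℤ) - T := by
  have sign_eq (t : Fin T) :
      (thresholdSign τ (k, t) : ℤ) = 2 * (if t.castSucc < τ k then 1 else 0) - 1 := by
    unfold thresholdSign
    split_ifs <;> rfl
  simp only [sign_eq, sum_sub_distrib, ← mul_sum, sum_boole]
  simp [Fin.lt_def, Fin.card_filter_val_lt, Nat.min_eq_right (τ k).is_le]

/-- Up to sign and the factor `2 ^ (m + 2)`, the change of the permanent of `signRows e τ` when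
`τ k` grows by one. -/
def signRowsWeight (m e : ℕ) (k : Fin (m + 1)) : ℤ := (k : ℕ).factorial * e.descFactorial (m - k)

lemma signRowsWeight_pos (h : m ≤ e) (k : Fin (m + 1)) : 0 < signRowsWeight m e k := by
  have := Nat.descFactorial_pos.2 ((Nat.sub_le m k).trans h)
  unfold signRowsWeight
  positivity

lemma mul_signRowsWeight_succ_le (h : (T + 1) * m ≤ e) (k : Fin m) :
    (T + 1 : ℤ) * signRowsWeight m e k.succ ≤ signRowsWeight m e k.castSucc := by
  obtain ⟨j, hj⟩ := Nat.exists_eq_add_of_lt k.is_lt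
  have succ_le : (T + 1) * (k + 1) ≤ e - j := by
    refine Nat.le_sub_of_add_le (le_trans ?_ h)
    nlinarith
  have nat_le : (T + 1) * (((k : ℕ) + 1).factorial * e.descFactorial j) ≤
      (k : ℕ).factorial * e.descFactorial (j + 1) :=
    calc (T + 1) * (((k : ℕ) + 1).factorial * e.descFactorial j)
        = (k : ℕ).factorial * ((T + 1) * (k + 1) * e.descFactorial j) := by
          rw [Nat.factorial_succ]; ring
      _ ≤ (k : ℕ).factorial * ((e - j) * e.descFactorial j) := by gcongr
  rw [signRowsWeight, signRowsWeight, Fin.val_succ, Fin.val_castSucc, show m - (k + 1) = j by omega,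
    show m - k = j + 1 by omega]
  exact_mod_cast nat_le

/-- The `±1` matrix with `m + 1` rows whose columns form `T` sign cubes for each `k` and `e` columns
of ones. On each cube with label `k` the last row is, up to sign, the product of the first `k` rows;
the threshold `τ k` is the number of cubes where this sign is positive. -/
def signRows (e : ℕ) (τ : Fin (m + 1) → Fin (T + 1)) :
    Fin (m + 1) → (Fin (m + 1) × Fin T) × (Fin (m + 1) → ℤˣ) ⊕ Fin e → ℤˣ :=
  cubeRows e (Fin.last m) (fun b ↦ Iio b.1) (thresholdSign τ)

theorem rectPerm_signRows (τ : Fin (m + 1) → Fin (T + 1)) :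
    rectPerm (fun i d ↦ (signRows e τ i d : ℤ)) = e.descFactorial (m + 1) +
      2 ^ (m + 1) * ∑ k : Fin (m + 1),
        (-1) ^ (k : ℕ) * signRowsWeight m e k * (2 * (τ k : ℤ) - T) := by
  rw [signRows, rectPerm_cubeRows fun b ↦ by simp [Fin.le_last], Fintype.card_fin,
    Fintype.sum_prod_type]
  simp only [Fin.card_Iio, ← mul_sum, sum_thresholdSign, signRowsWeight, Nat.add_sub_cancel,
    mul_assoc]

theorem rectPerm_signRows_injective (h : (T + 1) * m ≤ e) :
    Function.Injective fun τ : Fin (m + 1) → Fin (T + 1) ↦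
      rectPerm (fun i d ↦ (signRows e τ i d : ℤ)) := by
  intro τ τ' heq
  let δ (k : Fin (m + 1)) : ℤ := (-1) ^ (k : ℕ) * (τ k - τ' k)
  have abs_δ (k) : |δ k| = |(τ k : ℤ) - τ' k| := by simp [δ, abs_mul]
  have sum_eq : ∑ k, δ k * signRowsWeight m e k = 0 := by
    simp only [rectPerm_signRows] at heq
    have := sub_eq_zero.2 (mul_left_cancel₀ (by positivity) (add_left_cancel heq))
    rw [← sum_sub_distrib] at this
    refine (mul_eq_zero_iff_left (two_ne_zero (α := ℤ))).1 (Eq.trans ?_ this)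
    rw [mul_sum]
    exact sum_congr rfl fun k _ ↦ by simp only [δ]; ring
  have hme : m ≤ e := (Nat.le_mul_of_pos_left m T.succ_pos).trans h
  have hδ : δ = 0 := eq_zero_of_sum_mul_eq_zero (signRowsWeight_pos hme)
    (mul_signRowsWeight_succ_le h) (fun k ↦ by rw [abs_δ, abs_le]; omega) sum_eq
  funext k
  have diff_eq : (τ k : ℤ) - τ' k = 0 := by simpa [δ] using congrFun hδ k
  exact Fin.ext (by omega)

end Construction

section Counting

lemma exists_permanent_eq_rectPerm_mul {ι α : Type*} [Fintype ι] [Fintype α] {n : ℕ}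
    (M : ι → α → ℤˣ) (hα : Fintype.card α = n) (hι : Fintype.card ι ≤ n) :
    ∃ N : Matrix (Fin n) (Fin n) ℤˣ, (N.map Units.val).permanent =
      rectPerm (fun i d ↦ (M i d : ℤ)) * (n - Fintype.card ι).factorial := by
  let rows : Fin n ≃ ι ⊕ Fin (n - Fintype.card ι) :=
    Fintype.equivOfCardEq (by simp [Nat.add_sub_cancel' hι])
  let columns : Fin n ≃ α := Fintype.equivOfCardEq (by simp [hα])
  let padded : ι ⊕ Fin (n - Fintype.card ι) → α → ℤ := Sum.elim (fun i d ↦ (M i d : ℤ)) 1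
  have val_sumElim (i d) : (Sum.elim M 1 i d : ℤˣ) = padded i d := by
    cases i <;> rfl
  refine ⟨.of fun i j ↦ Sum.elim M 1 (rows i) (columns j), ?_⟩
  calc (Matrix.map _ Units.val).permanent
      = rectPerm fun i j ↦ padded (rows i) (columns j) := by
        rw [permanent_eq_rectPerm]
        exact congrArg rectPerm (funext₂ fun i j ↦ val_sumElim _ _)
    _ = _ := by
        rw [rectPerm_comp_equiv, rectPerm_sumElim_one, Fintype.card_fin, hα, Nat.descFactorial_self]

lemma permCountSq_eq_ncard_range (n : ℕ) : permCountSq n =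
    (Set.range fun N : Matrix (Fin n) (Fin n) ℤˣ ↦ (N.map Units.val).permanent).ncard := by
  have sqPerm_map (N : Matrix (Fin n) (Fin n) ℤˣ) :
      sqPerm (N.map fun u ↦ ((u : ℤ) : ℝ)) = ((N.map Units.val).permanent : ℤ) := by
    rw [← Matrix.permanent_transpose]
    simp [sqPerm, Matrix.permanent]
  rw [permCountSq, ← Set.ncard_image_of_injective _ Int.cast_injective (α := ℤ) (β := ℝ),
    ← Set.range_comp]
  congr 1
  ext x
  constructor
  · rintro ⟨M, hM, rfl⟩
    have exists_unit (i j) : ∃ u : ℤˣ, ((u : ℤ) : ℝ) = M i j :=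
      (hM i j).elim (fun h ↦ ⟨1, by simp [h]⟩) fun h ↦ ⟨-1, by simp [h]⟩
    choose N hN using exists_unit
    exact ⟨.of N, (sqPerm_map _).symm.trans (congrArg sqPerm (Matrix.ext hN))⟩
  · rintro ⟨N, rfl⟩
    refine ⟨N.map fun u ↦ ((u : ℤ) : ℝ), fun i j ↦ ?_, sqPerm_map N⟩
    rcases Int.units_eq_one_or (N i j) with h | h <;> simp [h]

lemma card_le_permCountSq {ι α X : Type*} [Fintype ι] [Fintype α] [Fintype X] {n : ℕ}
    {M : X → ι → α → ℤˣ} (hM : Function.Injective fun x ↦ rectPerm fun i d ↦ (M x i d : ℤ))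
    (hα : Fintype.card α = n) (hι : Fintype.card ι ≤ n) : Fintype.card X ≤ permCountSq n := by
  choose N hN using fun x ↦ exists_permanent_eq_rectPerm_mul (M x) hα hι
  have injective_permanent : Function.Injective fun x ↦ ((N x).map Units.val).permanent := by
    simp only [hN]
    exact (mul_left_injective₀ (by positivity)).comp hM
  rw [permCountSq_eq_ncard_range, ← Nat.card_eq_fintype_card, ← Set.ncard_univ,
    ← Set.ncard_image_of_injective _ injective_permanent]
  refine Set.ncard_le_ncard ?_ (Set.finite_range _)
  rintro _ ⟨x, -, rfl⟩
  exact ⟨N x, rfl⟩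

lemma pow_le_permCountSq {m T e n : ℕ} (he : (T + 1) * m ≤ e)
    (hn : (m + 1) * T * 2 ^ (m + 1) + e = n) (hmn : m + 1 ≤ n) :
    (T + 1) ^ (m + 1) ≤ permCountSq n := by
  simpa using card_le_permCountSq (rectPerm_signRows_injective he) (by simpa using hn)
    (by simpa using hmn)

lemma two_pow_sq_le_permCountSq {m n : ℕ} (hm : 0 < m) (hn : 8 ^ m ≤ n) :
    2 ^ m ^ 2 ≤ permCountSq n := by
  obtain ⟨k, rfl⟩ := Nat.exists_eq_add_one.2 hm
  obtain ⟨x, hx⟩ : ∃ x, 2 ^ (k + 1) = x := ⟨_, rfl⟩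
  have rows_lt : k + 2 ≤ x := hx ▸ Nat.lt_two_pow_self
  have columns_le : (k + 1) * x * x + (x + 1) * k ≤ n :=
    calc (k + 1) * x * x + (x + 1) * k
        ≤ (k + 2) * x ^ 2 := by nlinarith
      _ ≤ x * x ^ 2 := by gcongr
      _ = 8 ^ (k + 1) := by rw [← pow_succ', ← hx, ← pow_mul, mul_comm, pow_mul]; norm_num
      _ ≤ n := hn
  have rows_le : k + 1 ≤ n := (Nat.lt_pow_self (by norm_num)).le.trans hn
  calc 2 ^ (k + 1) ^ 2
      = x ^ (k + 1) := by rw [← hx, ← pow_mul, sq]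
    _ ≤ (x + 1) ^ (k + 1) := by gcongr; omega
    _ ≤ permCountSq n := pow_le_permCountSq (Nat.le_sub_of_add_le' columns_le)
        (by rw [hx]; exact Nat.add_sub_cancel' (le_of_add_le_left columns_le)) rows_le

end Counting

section Asymptotics

open Real

lemma rpow_mul_log_le_two_pow_sq {m n : ℕ} (hm : 0 < m) (hn : 0 < n) (hlt : n < 8 ^ (m + 1)) :
    (n : ℝ) ^ (1 / 36 * log n) ≤ 2 ^ m ^ 2 := by
  have log_two_pos : 0 < log 2 := log_pos one_lt_two
  have one_le_m : (1 : ℝ) ≤ m := by exact_mod_cast hm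
  have log_le : log n ≤ 6 * m * log 2 :=
    calc log n ≤ log ((2 : ℝ) ^ (3 * (m + 1))) := by
          rw [pow_mul]
          gcongr
          exact_mod_cast hlt.le
      _ = 3 * (m + 1) * log 2 := by rw [log_pow]; push_cast; ring
      _ ≤ 6 * m * log 2 := mul_le_mul_of_nonneg_right (by linarith) log_two_pos.le
  rw [rpow_def_of_pos (by positivity), ← exp_log (x := 2 ^ m ^ 2) (by positivity), exp_le_exp,
    log_pow]
  calc log n * (1 / 36 * log n)
      = 1 / 36 * log n ^ 2 := by ring
    _ ≤ 1 / 36 * (6 * m * log 2) ^ 2 := by gcongr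
    _ = m ^ 2 * log 2 * log 2 := by ring
    _ ≤ (m ^ 2 : ℕ) * log 2 := by
        push_cast
        exact mul_le_of_le_one_right (by positivity) (by linarith [log_two_lt_d9])

lemma eventually_rpow_mul_log_div_log_log_le {c : ℝ} (hc : 0 ≤ c) : ∀ᶠ n : ℕ in atTop,
    (n : ℝ) ^ (c * log n / log (log n)) ≤ (n : ℝ) ^ (c * log n) := by
  have log_log_tendsto : Tendsto (fun n : ℕ ↦ log (log n)) atTop atTop :=
    tendsto_log_atTop.comp (tendsto_log_atTop.comp tendsto_natCast_atTop_atTop)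
  filter_upwards [log_log_tendsto.eventually_ge_atTop 1, eventually_ge_atTop 1] with n hlog hn
  have one_le_n : (1 : ℝ) ≤ n := by exact_mod_cast hn
  exact rpow_le_rpow_of_exponent_le one_le_n
    (div_le_self (mul_nonneg hc (log_natCast_nonneg n)) hlog)

end Asymptotics

theorem stmt1_general : ∃ c : ℝ, 0 < c ∧ ∀ᶠ n : ℕ in atTop,
    (n : ℝ) ^ (c * Real.log n) ≤ permCountSq n := by
  refine ⟨1 / 36, by norm_num, ?_⟩
  filter_upwards [eventually_ge_atTop 8] with n hn
  have log_pos : 0 < Nat.log 8 n := Nat.log_pos (by norm_num) hn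
  calc (n : ℝ) ^ (1 / 36 * Real.log n)
      ≤ 2 ^ Nat.log 8 n ^ 2 := rpow_mul_log_le_two_pow_sq log_pos (by omega)
        (Nat.lt_pow_succ_log_self (by norm_num) n)
    _ ≤ permCountSq n := by
        exact_mod_cast two_pow_sq_le_permCountSq log_pos (Nat.pow_log_le_self 8 (by omega))

/-- There is a constant `c > 0` such that for all sufficiently large `n`,
`r_n ≥ n^(c · log n / log log n)`. -/
theorem stmt1 :
    ∃ c : ℝ, 0 < c ∧ ∃ N : ℕ, ∀ n : ℕ, N ≤ n →
      (n : ℝ) ^ (c * Real.log n / Real.log (Real.log n)) ≤ (permCountSq n : ℝ) := by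
  obtain ⟨c, hc, h⟩ := stmt1_general
  exact ⟨c, hc, eventually_atTop.1 <|
    (eventually_rpow_mul_log_div_log_log_le hc.le).mp (h.mono fun _ ↦ ge_trans)⟩
end

section
/- Let 1 ≤ k ≤ ℓ ≤ n, let A be a k×n real matrix, and let J_{ℓ−k,n} be the (ℓ−k)×n all-ones matrix. Then per(A ∗ J_{ℓ−k,n}) = per(A) · (n−k)_{ℓ−k}, where A ∗ J_{ℓ−k,n} is the ℓ×n matrix obtained by concatenating the rows of A with the rows of J_{ℓ−k,n}, and (m)_j = m(m−1)⋯(m−j+1) is the falling factorial. -/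
/-- The permanent of a rectangular `k × n` real matrix. -/
noncomputable def rperm {k n : ℕ} (A : Matrix (Fin k) (Fin n) ℝ) : ℝ :=
  ∑ σ : Fin k ↪ Fin n, ∏ i, A i (σ i)

/-!
An injection of the rows of `A ∗ B` into the columns is an injection `f` of the rows of `A` together
with an injection of the rows of `B` into the columns missed by `f`, so `per(A ∗ B)` is a Laplace
expansion over `f`. When every row of `B` is constant, the complementary permanents depend only on
the number of missed columns, hence not on `f`, and factor out of the sum.
-/

open Fintype (card)
open Matrix

section SumEmbedding

variable {α β γ : Type*} (f : α ↪ γ) (g : β ↪ ↥(Set.range f)ᶜ)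

theorem sumEmbeddingEquivSigmaEmbeddingRestricted_symm_inl (a : α) :
    Equiv.sumEmbeddingEquivSigmaEmbeddingRestricted.symm ⟨f, g⟩ (Sum.inl a) = f a :=
  rfl

theorem sumEmbeddingEquivSigmaEmbeddingRestricted_symm_inr (b : β) :
    Equiv.sumEmbeddingEquivSigmaEmbeddingRestricted.symm ⟨f, g⟩ (Sum.inr b) = g b :=
  rfl

end SumEmbedding

theorem card_compl_range_embedding {α β : Type*} [Fintype α] [Fintype β] [DecidableEq β]
    (f : α ↪ β) : card ↥(Set.range f)ᶜ = card β - card α := by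
  rw [Fintype.card_compl_set, Set.card_range_of_injective f.injective]

section RectPermanent

variable {m m₁ m₂ n p q R : Type*} [CommSemiring R]
  [Fintype m] [Fintype m₁] [Fintype m₂] [Fintype n] [Fintype p] [Fintype q]

/-- The permanent of a rectangular matrix over a commutative semiring, with rows and columns
indexed by arbitrary finite types; on real matrices indexed by `Fin k` and `Fin n` it is `rperm`.
It is `0` when there are more rows than columns. -/
noncomputable def rectPermanent (A : Matrix m n R) : R :=
  ∑ σ : m ↪ n, ∏ i, A i (σ i)

theorem rectPermanent_submatrix_equiv (A : Matrix m n R) (e₁ : p ≃ m) (e₂ : q ≃ n) :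
    rectPermanent (A.submatrix e₁ e₂) = rectPermanent A := by
  refine Fintype.sum_equiv (Equiv.embeddingCongr e₁ e₂) _ _ fun σ ↦ ?_
  refine Fintype.prod_equiv e₁ _ _ fun i ↦ ?_
  simp

theorem rectPermanent_replicateCol (c : m → R) :
    rectPermanent (replicateCol n c) = (card n).descFactorial (card m) * ∏ i, c i := by
  simp [rectPermanent, Fintype.card_embedding_eq]

theorem rectPermanent_fromRows [DecidableEq n] (A : Matrix m₁ n R) (B : Matrix m₂ n R) :
    rectPermanent (fromRows A B) =
      ∑ f : m₁ ↪ n, (∏ i, A i (f i)) *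
        rectPermanent (B.submatrix id ((↑) : ↥(Set.range f)ᶜ → n)) := by
  simp only [rectPermanent, Finset.mul_sum]
  rw [← Equiv.sumEmbeddingEquivSigmaEmbeddingRestricted.symm.sum_comp, Fintype.sum_sigma]
  simp only [Fintype.prod_sum_type, fromRows_apply_inl, fromRows_apply_inr, submatrix_apply, id,
    sumEmbeddingEquivSigmaEmbeddingRestricted_symm_inl,
    sumEmbeddingEquivSigmaEmbeddingRestricted_symm_inr]

theorem stmt3_general (A : Matrix m₁ n R) (c : m₂ → R) :
    rectPermanent (fromRows A (replicateCol n c)) =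
      rectPermanent A * ((card n - card m₁).descFactorial (card m₂) * ∏ i, c i) := by
  classical
  have complementary_permanent (f : m₁ ↪ n) :
      rectPermanent ((replicateCol n c).submatrix id ((↑) : ↥(Set.range f)ᶜ → n)) =
        (card n - card m₁).descFactorial (card m₂) * ∏ i, c i := by
    rw [← card_compl_range_embedding f]
    exact rectPermanent_replicateCol c
  simp only [rectPermanent_fromRows, complementary_permanent, ← Finset.sum_mul]
  rfl

end RectPermanent

theorem submatrix_append_finSumFinEquiv {k l : ℕ} {n R : Type*}
    (A : Matrix (Fin k) n R) (B : Matrix (Fin l) n R) :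
    (of (Fin.append A B)).submatrix finSumFinEquiv (Equiv.refl n) = fromRows A B := by
  ext (i | i) j
  · exact congrFun (Fin.append_left A B i) j
  · exact congrFun (Fin.append_right A B i) j

theorem rperm_append {k l n : ℕ} (A : Matrix (Fin k) (Fin n) ℝ) (B : Matrix (Fin l) (Fin n) ℝ) :
    rperm (of (Fin.append A B)) = rectPermanent (fromRows A B) := by
  rw [← submatrix_append_finSumFinEquiv, rectPermanent_submatrix_equiv]
  rfl

/-- For `1 ≤ k ≤ ℓ ≤ n` and a `k × n` real matrix `A`,
`per(A ∗ J_{ℓ−k,n}) = per(A) · (n−k)_{ℓ−k}`, where `A ∗ J_{ℓ−k,n}` is the row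
concatenation of `A` with the all-ones `(ℓ−k) × n` matrix. -/
theorem stmt3 (k l n : ℕ) (hk : 1 ≤ k) (hkl : k ≤ l) (hln : l ≤ n)
    (A : Matrix (Fin k) (Fin n) ℝ) :
    rperm (Matrix.of (Fin.append A (fun (_ : Fin (l - k)) (_ : Fin n) => (1 : ℝ)))) =
      rperm A * (Nat.descFactorial (n - k) (l - k) : ℝ) := by
  refine (rperm_append A _).trans ((stmt3_general A fun _ : Fin (l - k) ↦ (1 : ℝ)).trans ?_)
  simp [rperm, rectPermanent]
end

section
/- Fix an integer k ≥ 2, pairwise distinct rationals μ_1,…,μ_k, and an integer n_0. For 1 ≤ i ≤ k define the polynomial p̄_i ∈ ℚ[n] by p̄_i(n) = Σ_{ℓ=0}^{k} (−2)^ℓ (n−1−ℓ)_{k−ℓ} · e_ℓ(μ_1(n−n_0),…,μ_{i−1}(n−n_0), μ_i(n−n_0)−1, μ_{i+1}(n−n_0),…,μ_k(n−n_0)), where (m)_j = m(m−1)⋯(m−j+1). Then the ℚ-linear span of {p̄_1,…,p̄_k} inside ℚ[n] has dimension at least k−2. -/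
open Polynomial

/-- `pbar k μ n0 i` is the polynomial
`p̄_i(n) = Σ_{ℓ=0}^{k} (−2)^ℓ (n−1−ℓ)_{k−ℓ} ·
  e_ℓ(μ_1(n−n_0),…,μ_i(n−n_0)−1,…,μ_k(n−n_0)) ∈ ℚ[n]`,
where `(n−1−ℓ)_{k−ℓ} = Π_{t=0}^{k−ℓ−1} (n−1−ℓ−t)`. -/
noncomputable def pbar (k : ℕ) (μ : Fin k → ℚ) (n0 : ℚ) (i : Fin k) : ℚ[X] :=
  ∑ l ∈ Finset.range (k + 1),
    (-2 : ℚ[X]) ^ l *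
      (∏ t ∈ Finset.range (k - l), (X - C ((1 + l + t : ℕ) : ℚ))) *
      ∑ S ∈ Finset.powersetCard l (Finset.univ : Finset (Fin k)),
        ∏ m ∈ S, (C (μ m) * (X - C n0) - if m = i then 1 else 0)

/-! Write `y = n - n₀` and `k = #ι`. Splitting off the `i`-th variable in each `e_ℓ` shows
`p̄_i = A - ∑_{ℓ < k} w_{ℓ+1} y ^ ℓ e_ℓ(μ_m : m ≠ i)`, where `A` does not depend on `i` and `w_ℓ` is
the coefficient of `e_ℓ` in `p̄_i`. By Lagrange interpolation at the nodes `-μ_m`, the `k` vectors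
`(e_ℓ(μ_m : m ≠ i))_{ℓ < k}` form a basis of `ℚ ^ k`. Since `e_0 = 1`, the combination of the `p̄_i`
isolating a term with `ℓ ≥ 1` has coefficients of sum `0`, so that `A` cancels. Hence the span
contains `y ^ ℓ ∏_{ℓ+1 < j ≤ k} (n - j)` for `1 ≤ ℓ < k`. The order of vanishing of this polynomial
at `n₀` is `ℓ + 1` or `ℓ`, according to whether `n₀` is one of the `j` or not. These orders are
distinct once `ℓ = n₀ - 2` is left out; for `3 ≤ n₀ ≤ k` the polynomials with `ℓ = n₀ - 2` and
`ℓ = n₀ - 1` coincide. -/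

open Finset Lagrange

theorem card_sub_one_le_card_filter_ne {α β : Type*} [DecidableEq β] {s : Finset α} {f : α → β}
    (hf : Set.InjOn f s) (b : β) : #s - 1 ≤ #{x ∈ s | f x ≠ b} := by
  have hfiber : #{x ∈ s | f x = b} ≤ 1 := by
    refine card_le_one.mpr fun x hx y hy => ?_
    rw [mem_filter] at hx hy
    exact hf hx.1 hy.1 (hx.2.trans hy.2.symm)
  have hsplit : #{x ∈ s | f x = b} + #{x ∈ s | f x ≠ b} = #s := card_filter_add_card_filter_not _
  omega

section ElementarySymmetric

variable {R A ι : Type*} [CommSemiring R] [DecidableEq ι]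

theorem esymm_cons_succ (a : R) (s : Multiset R) (n : ℕ) :
    (a ::ₘ s).esymm (n + 1) = s.esymm (n + 1) + a * s.esymm n := by
  simp [Multiset.esymm, Multiset.powersetCard_cons, Multiset.map_map, Multiset.sum_map_mul_left]

theorem esymm_map_smul_right [CommSemiring A] [Algebra R A] (s : Multiset R) (y : A) (n : ℕ) :
    (s.map (· • y)).esymm n = s.esymm n • y ^ n := by
  induction s using Multiset.induction generalizing n with
  | empty => cases n <;> simp [Multiset.esymm, Multiset.powersetCard_zero_right]
  | cons a s ih =>
    cases n with
    | zero => simp [Multiset.esymm]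
    | succ n =>
      rw [Multiset.map_cons, esymm_cons_succ, esymm_cons_succ, ih, ih, add_smul, mul_smul,
        smul_mul_assoc, mul_smul_comm, pow_succ']

theorem esymm_map_update_succ {s : Finset ι} {i : ι} (hi : i ∈ s) (x : ι → R) (b : R) (n : ℕ) :
    (s.val.map (Function.update x i b)).esymm (n + 1) =
      ((s.erase i).val.map x).esymm (n + 1) + b * ((s.erase i).val.map x).esymm n := by
  have hmap : s.val.map (Function.update x i b) = b ::ₘ (s.erase i).val.map x := by
    rw [← insert_erase hi, insert_val_of_notMem (notMem_erase i s), Multiset.map_cons,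
      Function.update_self, erase_insert (notMem_erase i s)]
    congr 1
    exact Multiset.map_congr rfl fun m hm =>
      Function.update_of_ne (ne_of_mem_erase (mem_val.mp hm)) _ _
  rw [hmap, esymm_cons_succ]

theorem coeff_nodal_neg_erase {F : Type*} [CommRing F] {s : Finset ι} {i : ι} (hi : i ∈ s)
    (v : ι → F) {j : ℕ} (hj : j < #s) :
    (nodal (s.erase i) (-v)).coeff (#s - 1 - j) = ((s.erase i).val.map v).esymm j := by
  have hcard : Multiset.card (s.erase i).val = #s - 1 := card_erase_of_mem hi
  simp only [nodal, Pi.neg_apply, C_neg, sub_neg_eq_add]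
  rw [Finset.prod, Multiset.prod_X_add_C_coeff' _ _ (by omega), hcard]
  congr 1
  omega

theorem exists_sum_mul_esymm_erase {F : Type*} [Field F] {s : Finset ι} {v : ι → F}
    (hv : Set.InjOn v s) {l : ℕ} (hl : l < #s) :
    ∃ c : ι → F, ∀ j < #s,
      ∑ i ∈ s, c i * ((s.erase i).val.map v).esymm j = if j = l then 1 else 0 := by
  have hdeg : (X ^ (#s - 1 - l) : F[X]).degree < #s := by
    rw [degree_X_pow, Nat.cast_lt]
    omega
  have hinterp : X ^ (#s - 1 - l) = interpolate s (-v) _ :=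
    eq_interpolate (neg_injective.comp_injOn hv) hdeg
  rw [interpolate_eq_nodalWeight_mul_nodal_div_X_sub_C] at hinterp
  refine ⟨fun i => nodalWeight s (-v) i * (X ^ (#s - 1 - l)).eval ((-v) i), fun j hj => ?_⟩
  have hexp : #s - 1 - j = #s - 1 - l ↔ j = l := by omega
  have hcoeff := congrArg (coeff · (#s - 1 - j)) hinterp
  simp only [coeff_X_pow, finsetSum_coeff, coeff_mul_C, coeff_C_mul, hexp] at hcoeff
  rw [hcoeff]
  refine sum_congr rfl fun i hi => ?_
  rw [← nodal_erase_eq_nodal_div hi, coeff_nodal_neg_erase hi v hj]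
  ring

end ElementarySymmetric

section PerturbedSum

variable {A ι : Type*} [CommRing A] [Fintype ι] [DecidableEq ι]

/-- The sum `∑_ℓ w_ℓ e_ℓ(x_1, …, x_i - 1, …, x_k)`, that is `pbar` with arbitrary weights `w_ℓ`
and variables `x_m` in any commutative ring, indexed by any finite type. -/
def perturbedEsymmSum (w : ℕ → A) (x : ι → A) (i : ι) : A :=
  ∑ l ∈ range (Fintype.card ι + 1), w l * (univ.val.map (Function.update x i (x i - 1))).esymm l

theorem perturbedEsymmSum_eq_sub (w : ℕ → A) (x : ι → A) (i : ι) :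
    perturbedEsymmSum w x i =
      ∑ l ∈ range (Fintype.card ι + 1), w l * (univ.val.map x).esymm l -
        ∑ l ∈ range (Fintype.card ι), w (l + 1) * ((univ.erase i).val.map x).esymm l := by
  have hx := esymm_map_update_succ (mem_univ i) x (x i)
  rw [Function.update_eq_self] at hx
  simp only [perturbedEsymmSum, sum_range_succ', hx, esymm_map_update_succ (mem_univ i)]
  rw [add_sub_right_comm, ← sum_sub_distrib]
  congr 1
  · exact sum_congr rfl fun l _ => by ring
  · simp [Multiset.esymm]

variable {K : Type*}

theorem sum_smul_perturbedEsymmSum [CommRing K] [Algebra K A] {c : ι → K} (hc : ∑ i, c i = 0)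
    (w : ℕ → A) (x : ι → A) :
    ∑ i, c i • perturbedEsymmSum w x i =
      -∑ l ∈ range (Fintype.card ι),
        w (l + 1) * ∑ i, c i • ((univ.erase i).val.map x).esymm l := by
  simp only [perturbedEsymmSum_eq_sub, smul_sub, sum_sub_distrib, ← sum_smul]
  rw [hc, zero_smul, zero_sub]
  simp only [smul_sum, mul_sum, mul_smul_comm]
  rw [sum_comm]

theorem weight_mul_pow_mem_span_perturbedEsymmSum [Field K] [Algebra K A] {μ : ι → K}
    (hμ : Function.Injective μ) (w : ℕ → A) (y : A) {l : ℕ} (hl : l ≠ 0)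
    (hlk : l < Fintype.card ι) :
    w (l + 1) * y ^ l ∈
      Submodule.span K (Set.range (perturbedEsymmSum w fun m => μ m • y)) := by
  obtain ⟨c, hc⟩ := exists_sum_mul_esymm_erase (s := univ) hμ.injOn hlk
  have hc_sum : ∑ i, c i = 0 := by
    simpa [Multiset.esymm, hl.symm] using hc 0 (Nat.zero_lt_of_lt hlk)
  have hesymm (i : ι) (j : ℕ) : ((univ.erase i).val.map fun m => μ m • y).esymm j =
      ((univ.erase i).val.map μ).esymm j • y ^ j := by
    rw [← esymm_map_smul_right, Multiset.map_map, Function.comp_def]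
  have hcomb : ∑ i, c i • perturbedEsymmSum w (fun m => μ m • y) i = -(w (l + 1) * y ^ l) := by
    rw [sum_smul_perturbedEsymmSum hc_sum, neg_inj,
      sum_eq_single_of_mem l (mem_range.mpr hlk)]
    · simp only [hesymm, smul_smul, ← sum_smul]
      rw [hc l hlk, if_pos rfl, one_smul]
    · intro j hj hjl
      simp only [hesymm, smul_smul, ← sum_smul]
      rw [hc j (mem_range.mp hj), if_neg hjl, zero_smul, mul_zero]
  rw [← neg_mem_iff, ← hcomb]
  exact Submodule.sum_mem _ fun i _ =>
    Submodule.smul_mem _ _ (Submodule.subset_span (Set.mem_range_self i))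

end PerturbedSum

section OrderOfVanishing

variable {R ι : Type*} [CommRing R] [IsDomain R]

theorem linearIndependent_of_injective_rootMultiplicity {f : ι → R[X]} {a : R}
    (hf : ∀ i, f i ≠ 0) (hinj : Function.Injective fun i => (f i).rootMultiplicity a) :
    LinearIndependent R f := by
  classical
  rw [linearIndependent_iff']
  intro s g hg
  by_contra! hne
  obtain ⟨i, hi, hmin⟩ := exists_min_image {i ∈ s | g i ≠ 0} (fun i => (f i).rootMultiplicity a)
    (hne.imp fun _ h => mem_filter.mpr h)
  obtain ⟨his, hgi⟩ := mem_filter.mp hi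
  have hdvd_others : (X - C a) ^ ((f i).rootMultiplicity a + 1) ∣ ∑ j ∈ s.erase i, g j • f j := by
    refine dvd_sum fun j hj => ?_
    obtain ⟨hji, hjs⟩ := mem_erase.mp hj
    by_cases hgj : g j = 0
    · simp [hgj]
    · have hlt := (hmin j (mem_filter.mpr ⟨hjs, hgj⟩)).lt_of_ne (hinj.ne hji.symm)
      rw [smul_eq_C_mul]
      exact ((pow_dvd_pow _ hlt).trans (pow_rootMultiplicity_dvd _ _)).mul_left _
  have hdvd : (X - C a) ^ ((f i).rootMultiplicity a + 1) ∣ C (g i) * f i := by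
    rw [← add_sum_erase s _ his] at hg
    rw [← smul_eq_C_mul, eq_neg_of_add_eq_zero_left hg]
    exact hdvd_others.neg_right
  have hgf : C (g i) * f i ≠ 0 := mul_ne_zero (C_ne_zero.mpr hgi) (hf i)
  rw [← le_rootMultiplicity_iff hgf, rootMultiplicity_mul hgf, rootMultiplicity_C] at hdvd
  omega

theorem rootMultiplicity_nodal [DecidableEq R] {s : Finset ι} {v : ι → R} (hv : Set.InjOn v s)
    (a : R) : (nodal s v).rootMultiplicity a = if a ∈ s.image v then 1 else 0 := by
  have hroots : (nodal s v).roots = (s.image v).val := by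
    rw [← roots_prod_X_sub_C, prod_image hv, nodal]
  rw [← count_roots, hroots, Multiset.count_eq_of_nodup (s.image v).nodup]
  rfl

end OrderOfVanishing

section FallingFactorial

variable {K : Type*} [Field K]

/-- The weight `c ^ ℓ (n - 1 - ℓ)_{k - ℓ}` as a polynomial in `n`; for `c = -2` it is the
coefficient of `e_ℓ` in `pbar`. The falling factorial is encoded by its roots `ℓ + 1, …, k`. -/
noncomputable def fallingWeight (c : K) (k l : ℕ) : K[X] :=
  C (c ^ l) * nodal (Ioc l k) Nat.cast

/-- The polynomial `(n - a) ^ ℓ (n - 2 - ℓ)_{k - 1 - ℓ}`, which for `a = n₀` and `1 ≤ ℓ < k` lies in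
the span of the `p̄_i`. The falling factorial is encoded by its roots `ℓ + 2, …, k`. -/
noncomputable def powMulFalling (k : ℕ) (a : K) (l : ℕ) : K[X] :=
  nodal (Ioc (l + 1) k) Nat.cast * (X - C a) ^ l

theorem powMulFalling_mem_span {ι : Type*} [Fintype ι] [DecidableEq ι] {μ : ι → K}
    (hμ : Function.Injective μ) {c : K} (hc : c ≠ 0) (a : K) {l : ℕ} (hl : l ≠ 0)
    (hlk : l < Fintype.card ι) :
    powMulFalling (Fintype.card ι) a l ∈ Submodule.span K (Set.range
      (perturbedEsymmSum (fallingWeight c (Fintype.card ι)) fun m => μ m • (X - C a))) := by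
  have hmem := weight_mul_pow_mem_span_perturbedEsymmSum hμ
    (fallingWeight c (Fintype.card ι)) (X - C a) hl hlk
  rw [fallingWeight, mul_assoc, ← smul_eq_C_mul] at hmem
  exact (Submodule.smul_mem_iff _ (pow_ne_zero _ hc)).mp hmem

variable [CharZero K]

theorem rootMultiplicity_powMulFalling [DecidableEq K] (k : ℕ) (a : K) (l : ℕ) :
    (powMulFalling k a l).rootMultiplicity a =
      (if a ∈ (Ioc (l + 1) k).image Nat.cast then 1 else 0) + l := by
  rw [powMulFalling, rootMultiplicity_mul_X_sub_C_pow nodal_ne_zero,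
    rootMultiplicity_nodal Nat.cast_injective.injOn]

theorem injOn_rootMultiplicity_powMulFalling (k : ℕ) (a : K) :
    Set.InjOn (fun l => (powMulFalling k a l).rootMultiplicity a)
      {l : ℕ | ((l + 2 : ℕ) : K) ≠ a} := by
  classical
  intro l hl m hm hlm
  by_cases ha : ∃ j : ℕ, (j : K) = a
  · obtain ⟨j, rfl⟩ := ha
    simp only [rootMultiplicity_powMulFalling, mem_image, Nat.cast_inj, exists_eq_right,
      mem_Ioc, Set.mem_ofPred_eq, ne_eq] at hl hm hlm
    split_ifs at hlm <;> omega
  · push Not at ha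
    simpa [rootMultiplicity_powMulFalling, ha] using hlm

theorem linearIndependent_powMulFalling (k : ℕ) (a : K) (s : Finset ℕ)
    (hs : ∀ l ∈ s, ((l + 2 : ℕ) : K) ≠ a) :
    LinearIndependent K fun l : s => powMulFalling k a l :=
  linearIndependent_of_injective_rootMultiplicity (a := a)
    (fun _ => mul_ne_zero nodal_ne_zero (pow_ne_zero _ (X_sub_C_ne_zero a)))
    ((injOn_rootMultiplicity_powMulFalling k a).mono hs).injective

theorem stmt12_general {ι : Type*} [Fintype ι] [DecidableEq ι] {μ : ι → K}
    (hμ : Function.Injective μ) {c : K} (hc : c ≠ 0) (a : K) :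
    Fintype.card ι - 2 ≤ Module.finrank K (Submodule.span K (Set.range
      (perturbedEsymmSum (fallingWeight c (Fintype.card ι)) fun m => μ m • (X - C a)))) := by
  classical
  set k := Fintype.card ι
  set V := Submodule.span K (Set.range
    (perturbedEsymmSum (fallingWeight c k) fun m => μ m • (X - C a)))
  have : FiniteDimensional K V := FiniteDimensional.span_of_finite K (Set.finite_range _)
  set s : Finset ℕ := {l ∈ Ico 1 k | ((l + 2 : ℕ) : K) ≠ a}
  have hcard : k - 1 - 1 ≤ #s := by
    rw [← Nat.card_Ico 1 k]
    refine card_sub_one_le_card_filter_ne (Function.Injective.injOn fun l m hlm => ?_) a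
    exact Nat.add_right_cancel (Nat.cast_injective hlm)
  have hspan : Submodule.span K (Set.range fun l : s => powMulFalling k a l) ≤ V := by
    rw [Submodule.span_le]
    rintro _ ⟨⟨l, hl⟩, rfl⟩
    obtain ⟨hl1, hlk⟩ := mem_Ico.mp (mem_filter.mp hl).1
    exact powMulFalling_mem_span hμ hc a (Nat.one_le_iff_ne_zero.mp hl1) hlk
  calc k - 2 ≤ #s := hcard
    _ = Module.finrank K (Submodule.span K (Set.range fun l : s => powMulFalling k a l)) := by
      rw [finrank_span_eq_card (linearIndependent_powMulFalling k a s fun l hl =>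
        (mem_filter.mp hl).2), Fintype.card_coe]
    _ ≤ Module.finrank K V := Submodule.finrank_mono hspan

end FallingFactorial

theorem pbar_eq_perturbedEsymmSum (k : ℕ) (μ : Fin k → ℚ) (a : ℚ) :
    pbar k μ a = perturbedEsymmSum (fallingWeight (-2) k) fun m => μ m • (X - C a) := by
  ext1 i
  rw [pbar, perturbedEsymmSum, Fintype.card_fin]
  refine sum_congr rfl fun l _ => ?_
  have hweight : (-2 : ℚ[X]) ^ l * ∏ t ∈ range (k - l), (X - C ((1 + l + t : ℕ) : ℚ)) =
      fallingWeight (-2) k l := by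
    rw [fallingWeight, nodal, ← Ico_add_one_add_one_eq_Ioc, prod_Ico_eq_prod_range,
      Nat.add_sub_add_right, add_comm 1 l]
    simp only [C_pow, C_neg, C_ofNat, map_natCast]
  have hvars : Function.update (fun m => μ m • (X - C a)) i (μ i • (X - C a) - 1) =
      fun m => C (μ m) * (X - C a) - if m = i then 1 else 0 := by
    ext1 m
    obtain rfl | hm := eq_or_ne m i
    · simp [smul_eq_C_mul]
    · simp [hm, smul_eq_C_mul]
  rw [hweight, hvars, esymm_map_val]

/-- For `k ≥ 2`, pairwise distinct rationals `μ_1,…,μ_k` and an integer `n_0`,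
the ℚ-linear span of `{p̄_1,…,p̄_k}` in `ℚ[n]` has dimension at least `k − 2`. -/
theorem stmt12 (k : ℕ) (hk : 2 ≤ k) (μ : Fin k → ℚ) (hμ : Function.Injective μ)
    (n0 : ℤ) :
    k - 2 ≤ Module.finrank ℚ
      (Submodule.span ℚ (Set.range (pbar k μ (n0 : ℚ)))) := by
  have h := stmt12_general (c := -2) hμ (by norm_num) (n0 : ℚ)
  rwa [Fintype.card_fin, ← pbar_eq_perturbedEsymmSum] at h
end
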